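/- Let p be a prime, m ∈ ℕ with 0 < m < p, α₀ := m/p, α₁ ∈ (α₀, 1), and let M be the PI-RAPPOR randomizer. Then for all nonzero x, j ∈ ZMod p, the probability that the decoded bit at position j equals 1 is Pr_{φ ~ M_x}[bool(φ₀ + j·φ₁) = 1] = α₁ if x = j, and = α₀ if x ≠ j. -/

import Mathlib

/-!
A uniformly random `φ = (φ₀, φ₁)` evaluates to a uniform point `φ₀ + x * φ₁`, and when `x - j` is a
unit `φ ↦ (φ₀ + x * φ₁, φ₀ + j * φ₁)` is a bijection, so the values at `x` and `j` are independent.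
Let `S` be the set of values decoded as the bit one. The randomizer on input `x` only reweights the
value at `x`, so that it falls in `S` with probability `α`; when `x - j` is a unit, independence
keeps the value at `j` uniform.
-/

open Finset

section AffineEvaluation

variable {R : Type*} [Ring R]

theorem bijective_affine_eval_pair {x j : R} (hxj : IsUnit (x - j)) :
    Function.Bijective fun φ : R × R ↦ (φ.1 + x * φ.2, φ.1 + j * φ.2) := by
  have hbij : Function.Bijective ((x - j) * ·) := IsUnit.isUnit_iff_mulLeft_bijective.1 hxj
  refine ⟨fun φ ψ h ↦ ?_, fun q ↦ ?_⟩
  · obtain ⟨hx, hj⟩ := Prod.mk.inj h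
    have hslope : φ.2 = ψ.2 := hbij.injective <| by
      simpa only [add_sub_add_left_eq_sub, ← sub_mul] using congrArg₂ (· - ·) hx hj
    exact Prod.ext (by simpa only [hslope, add_left_inj] using hx) hslope
  · obtain ⟨b, hb⟩ : ∃ b, (x - j) * b = q.1 - q.2 := hbij.surjective _
    refine ⟨(q.1 - x * b, b), Prod.ext (sub_add_cancel _ _) ?_⟩
    change q.1 - x * b + j * b = q.2
    rw [sub_add, ← sub_mul, hb, sub_sub_cancel]

variable [Fintype R] {E : Type*} [AddCommMonoid E]

theorem sum_affine_eval (x : R) (f : R → E) :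
    ∑ φ : R × R, f (φ.1 + x * φ.2) = Fintype.card R • ∑ u, f u := by
  have hslope (b : R) : ∑ a, f (a + x * b) = ∑ u, f u :=
    Equiv.sum_comp (Equiv.addRight (x * b)) f
  simp only [Fintype.sum_prod_type_right, hslope, sum_const, card_univ]

variable [DecidableEq R]

theorem sum_affine_eval_filter_self (x : R) (S : Finset R) (w : R → E) :
    ∑ φ : R × R with φ.1 + x * φ.2 ∈ S, w (φ.1 + x * φ.2) = Fintype.card R • ∑ u ∈ S, w u := by
  rw [sum_filter, sum_affine_eval x fun u ↦ if u ∈ S then w u else 0, sum_ite_mem, univ_inter]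

theorem sum_affine_eval_filter_of_isUnit_sub {x j : R} (hxj : IsUnit (x - j)) (S : Finset R)
    (w : R → E) :
    ∑ φ : R × R with φ.1 + j * φ.2 ∈ S, w (φ.1 + x * φ.2) = #S • ∑ u, w u :=
  calc ∑ φ : R × R with φ.1 + j * φ.2 ∈ S, w (φ.1 + x * φ.2)
      = ∑ q : R × R, if q.2 ∈ S then w q.1 else 0 := by
        rw [sum_filter]
        exact (bijective_affine_eval_pair hxj).sum_comp fun q ↦ if q.2 ∈ S then w q.1 else 0
    _ = #S • ∑ u, w u := by
        simp only [Fintype.sum_prod_type_right, sum_ite_irrel, sum_const_zero, sum_ite_mem,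
          univ_inter, sum_const]

end AffineEvaluation

section Randomizer

variable {R E : Type*} [Fintype R] [DecidableEq R] [Field E]

/-- The weight on `R` that gives total mass `α` to `S` and `1 - α` to its complement, uniformly on
each: under the PI-RAPPOR randomizer, the law of `φ₀ + x * φ₁` at its own input `x`. -/
def twoLevelWeight (S : Finset R) (α : E) (u : R) : E :=
  if u ∈ S then α / #S else (1 - α) / #Sᶜ

theorem sum_twoLevelWeight_mem [CharZero E] {S : Finset R} (hS : S.Nonempty) (α : E) :
    ∑ u ∈ S, twoLevelWeight S α u = α := by
  have hcard : (#S : E) ≠ 0 := Nat.cast_ne_zero.2 hS.card_ne_zero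
  have hval (u : R) (hu : u ∈ S) : twoLevelWeight S α u = α / #S := if_pos hu
  rw [sum_congr rfl hval, sum_const, nsmul_eq_mul, mul_div_cancel₀ _ hcard]

theorem sum_twoLevelWeight [CharZero E] {S : Finset R} (hS : S.Nonempty) (hSc : Sᶜ.Nonempty)
    (α : E) : ∑ u, twoLevelWeight S α u = 1 := by
  have hcard : (#Sᶜ : E) ≠ 0 := Nat.cast_ne_zero.2 hSc.card_ne_zero
  have hcompl : ∑ u ∈ Sᶜ, twoLevelWeight S α u = 1 - α := by
    have hval (u : R) (hu : u ∈ Sᶜ) : twoLevelWeight S α u = (1 - α) / #Sᶜ :=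
      if_neg (mem_compl.1 hu)
    rw [sum_congr rfl hval, sum_const, nsmul_eq_mul, mul_div_cancel₀ _ hcard]
  rw [← sum_add_sum_compl S, sum_twoLevelWeight_mem hS, hcompl, add_sub_cancel]

/-- The PI-RAPPOR randomizer over a finite ring `R`, with an arbitrary set `S` of values decoded as
the bit one: input `x` is sent to this mass function on pairs `φ`, which encode the affine functions
`t ↦ φ.1 + t * φ.2`. -/
def piRappor [Ring R] (S : Finset R) (α : E) (x : R) (φ : R × R) : E :=
  twoLevelWeight S α (φ.1 + x * φ.2) / Fintype.card R

theorem stmt_14_general [Ring R] [CharZero E] {S : Finset R} (hS : S.Nonempty)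
    (hSc : Sᶜ.Nonempty) (α : E) {x j : R} (hxj : x = j ∨ IsUnit (x - j)) :
    ∑ φ : R × R with φ.1 + j * φ.2 ∈ S, piRappor S α x φ =
      if x = j then α else (#S : E) / Fintype.card R := by
  have hcard : (Fintype.card R : E) ≠ 0 := Nat.cast_ne_zero.2 Fintype.card_ne_zero
  simp only [piRappor, ← sum_div]
  split_ifs with heq
  · rw [heq, sum_affine_eval_filter_self, sum_twoLevelWeight_mem hS, nsmul_eq_mul,
      mul_div_cancel_left₀ _ hcard]
  · rw [sum_affine_eval_filter_of_isUnit_sub (hxj.resolve_left heq), sum_twoLevelWeight hS hSc,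
      nsmul_one]

end Randomizer

section ZMod

variable {n m : ℕ} [NeZero n]

theorem card_zmod_val_lt (hmn : m ≤ n) : #{u : ZMod n | u.val < m} = m := by
  cases n with
  | zero => exact absurd rfl (NeZero.ne 0)
  | succ k => exact Fin.card_filter_val_lt.trans (min_eq_right hmn)

theorem card_compl_zmod_val_lt (hmn : m ≤ n) :
    #({u : ZMod n | u.val < m} : Finset (ZMod n))ᶜ = n - m := by
  rw [card_compl, ZMod.card, card_zmod_val_lt hmn]

theorem zmod_val_lt_nonempty (hm : 0 < m) : ({u : ZMod n | u.val < m} : Finset (ZMod n)).Nonempty :=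
  ⟨0, by simpa only [mem_filter_univ, ZMod.val_zero] using hm⟩

theorem compl_zmod_val_lt_nonempty (hmn : m < n) :
    ({u : ZMod n | u.val < m} : Finset (ZMod n))ᶜ.Nonempty :=
  card_pos.1 <| by simpa only [card_compl_zmod_val_lt hmn.le] using Nat.sub_pos_of_lt hmn

theorem piRappor_zmod_val_lt (hmn : m ≤ n) {E : Type*} [Field E] (α : E) (x : ZMod n)
    (φ : ZMod n × ZMod n) :
    piRappor {u : ZMod n | u.val < m} α x φ =
      if (φ.1 + x * φ.2).val < m then α / (m * n) else (1 - α) / ((n - m) * n) := by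
  simp only [piRappor, twoLevelWeight, mem_filter_univ, card_zmod_val_lt hmn,
    card_compl_zmod_val_lt hmn, Nat.cast_sub hmn, ZMod.card, ite_div, div_div]

end ZMod

/-- **The marginal of each decoded bit of PI-RAPPOR.**
For nonzero `x, j ∈ ZMod p`, the probability under `M_x` that the decoded bit at position
`j` equals one is `α₁` if `x = j` and `α₀` otherwise. -/
theorem stmt_14 (p : ℕ) [Fact p.Prime] (m : ℕ) (hm0 : 0 < m) (hmp : m < p)
    (α₀ α₁ : ℝ) (hα₀ : α₀ = (m : ℝ) / p) (hα₁ : α₀ < α₁) (hα₁' : α₁ < 1)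
    (M : ZMod p → ZMod p × ZMod p → ℝ)
    (hM : ∀ j φ, M j φ =
      if (φ.1 + j * φ.2).val < m then α₁ / (m * p) else (1 - α₁) / ((p - m) * p)) :
    ∀ x j : ZMod p, x ≠ 0 → j ≠ 0 →
      ∑ φ ∈ univ.filter (fun φ : ZMod p × ZMod p => (φ.1 + j * φ.2).val < m), M x φ =
        if x = j then α₁ else α₀ := by
  intro x j _ _
  simpa only [piRappor_zmod_val_lt hmp.le, ← hM, mem_filter_univ, card_zmod_val_lt hmp.le,
    ZMod.card, ← hα₀]
    using stmt_14_general (zmod_val_lt_nonempty hm0) (compl_zmod_val_lt_nonempty hmp) α₁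
      ((eq_or_ne x j).imp_right fun hne ↦ (sub_ne_zero.2 hne).isUnit)
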